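/- arXiv:2504.11768 — 3 statements merged into one kernel-verified Lean document; each statement's English description precedes it below -/
import Mathlib

section
/- Let T be a compactly generated triangulated category with two ℕ-equivalent generating sequences G and G′. Then (1) the extended good metrics M^G and M^{G′} on T^c are ℕ-equivalent, and (2) the orthogonal metrics R^G and R^{G′} on T are ℕ-equivalent. -/
namespace GApprox

open CategoryTheory CategoryTheory.Limits CategoryTheory.Pretriangulated

universe w v u

variable (C : Type u) [Category.{v} C] [HasZeroObject C] [HasShift C ℤ]
  [Preadditive C] [∀ n : ℤ, (shiftFunctor C n).Additive] [Pretriangulated C]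
  [HasCoproducts.{v} C]

/-- The right orthogonal of a class of objects. -/
def rOrth (A : Set C) : Set C := {X | ∀ a ∈ A, ∀ f : a ⟶ X, f = 0}

/-- The left orthogonal of a class of objects. -/
def lOrth (A : Set C) : Set C := {X | ∀ a ∈ A, ∀ f : X ⟶ a, f = 0}

/-- `Hom(A, B) = 0`. -/
def homZero (A B : Set C) : Prop := ∀ a ∈ A, ∀ b ∈ B, ∀ f : a ⟶ b, f = 0

/-- The star operation `A ⋆ B`: objects `Y` admitting a distinguished triangle
`X ⟶ Y ⟶ Z ⟶ ΣX` with `X ∈ A` and `Z ∈ B`. -/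
def starSet (A B : Set C) : Set C :=
  {Y | ∃ (X Z : C) (f : X ⟶ Y) (g : Y ⟶ Z) (h : Z ⟶ X⟦(1 : ℤ)⟧),
    Triangle.mk f g h ∈ (distTriang C) ∧ X ∈ A ∧ Z ∈ B}

/-- The (strictly full) shift `Σⁿ A` of a class of objects. -/
def shiftSet (n : ℤ) (A : Set C) : Set C :=
  {X | ∃ a ∈ A, Nonempty (X ≅ (shiftFunctor C n).obj a)}

/-- An object is compact if any map to a coproduct factors through a finite subcoproduct. -/
def IsCompactObj (X : C) : Prop :=
  ∀ (α : Type v) (f : α → C) (g : X ⟶ ∐ f),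
    ∃ (s : Finset α) (h : X ⟶ ∐ (fun i : {a : α // a ∈ s} => f i.1)),
      g = h ≫ Sigma.desc (fun i => Sigma.ι f i.1)

/-- The class of compact objects `T^c`. -/
def compacts : Set C := {X | IsCompactObj C X}

/-- The category is compactly generated. -/
def CompactlyGenerated : Prop :=
  ∀ X : C, (∀ K ∈ compacts C, ∀ f : K ⟶ X, f = 0) → IsZero X

/-- Closure under direct summands (retracts), `smd`. -/
def smd (A : Set C) : Set C :=
  {X | ∃ Y ∈ A, ∃ (i : X ⟶ Y) (r : Y ⟶ X), i ≫ r = 𝟙 X}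

/-- Closure of a class of objects under finite direct sums and extensions (`coprod`). -/
inductive extClosure (U : Set C) : C → Prop
  | of {X : C} : X ∈ U → extClosure U X
  | zero {X : C} : IsZero X → extClosure U X
  | ext {X Y Z : C} (f : X ⟶ Y) (g : Y ⟶ Z) (h : Z ⟶ X⟦(1 : ℤ)⟧) :
      Triangle.mk f g h ∈ (distTriang C) → extClosure U X → extClosure U Z → extClosure U Y

/-- Closure of a class of objects under arbitrary coproducts, extensions and
direct summands. -/
inductive bigClosure (U : Set C) : C → Prop
  | of {X : C} : X ∈ U → bigClosure U X
  | zero {X : C} : IsZero X → bigClosure U X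
  | coprod {α : Type v} (f : α → C) :
      (∀ i, bigClosure U (f i)) → ∀ {X : C}, (X ≅ ∐ f) → bigClosure U X
  | ext {X Y Z : C} (f : X ⟶ Y) (g : Y ⟶ Z) (h : Z ⟶ X⟦(1 : ℤ)⟧) :
      Triangle.mk f g h ∈ (distTriang C) → bigClosure U X → bigClosure U Z → bigClosure U Y
  | retract {X Y : C} (i : X ⟶ Y) (r : Y ⟶ X) :
      i ≫ r = 𝟙 X → bigClosure U Y → bigClosure U X

/-- Closure of a class of objects under finite direct sums, `add`. -/
def addClosure (U : Set C) : Set C :=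
  {X | ∃ (n : ℕ) (f : ULift.{v} (Fin n) → C), (∀ i, f i ∈ U) ∧ Nonempty (X ≅ ∐ f)}

/-- Closure of a class of objects under arbitrary coproducts, `Add`. -/
def bigAddClosure (U : Set C) : Set C :=
  {X | ∃ (α : Type v) (f : α → C), (∀ i, f i ∈ U) ∧ Nonempty (X ≅ ∐ f)}

/-- `coprod_n(U)`. -/
def coprodPow (U : Set C) : ℕ → Set C
  | 0 => {X | IsZero X}
  | n + 1 => starSet C (addClosure C U) (coprodPow U n)

/-- `Coprod_n(U)`. -/
def coprodPowBig (U : Set C) : ℕ → Set C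
  | 0 => {X | IsZero X}
  | n + 1 => starSet C (bigAddClosure C U) (coprodPowBig U n)

/-- `G[a,b] = ∪ { G^m : a ≤ m ≤ b }`. -/
def unionIcc (G : ℤ → Set C) (a b : ℤ) : Set C := ⋃ m ∈ Set.Icc a b, G m

/-- `G(-∞,b] = ∪ { G^m : m ≤ b }`. -/
def unionIic (G : ℤ → Set C) (b : ℤ) : Set C := ⋃ m ∈ Set.Iic b, G m

/-- `G(-∞,∞) = ∪ { G^m : m ∈ ℤ }`. -/
def unionAll (G : ℤ → Set C) : Set C := ⋃ m : ℤ, G m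

/-- `G^{[a,b]} = smd(coprod(G[a,b]))`. -/
def gInt (G : ℤ → Set C) (a b : ℤ) : Set C :=
  smd C {X | extClosure C (unionIcc C G a b) X}

/-- `G^{(-∞,b]} = smd(coprod(G(-∞,b]))`. -/
def gIic (G : ℤ → Set C) (b : ℤ) : Set C :=
  smd C {X | extClosure C (unionIic C G b) X}

/-- `G^{[a,b]}_k = smd(coprod_k(G[a,b]))`. -/
def gIntPow (G : ℤ → Set C) (a b k : ℤ) : Set C :=
  smd C (coprodPow C (unionIcc C G a b) k.toNat)

/-- `Ḡ^{[a,b]}`. -/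
def gBarInt (G : ℤ → Set C) (a b : ℤ) : Set C :=
  {X | bigClosure C (unionIcc C G a b) X}

/-- `Ḡ^{(-∞,b]}`. -/
def gBarIic (G : ℤ → Set C) (b : ℤ) : Set C :=
  {X | bigClosure C (unionIic C G b) X}

/-- `Ḡ^{[a,b]}_k = smd(Coprod_k(G[a,b]))`. -/
def gBarIntPow (G : ℤ → Set C) (a b k : ℤ) : Set C :=
  smd C (coprodPowBig C (unionIcc C G a b) k.toNat)

/-- `M^G_n := G^{(-∞,-n]}`. -/
def MG (G : ℤ → Set C) (n : ℤ) : Set C := gIic C G (-n)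

/-- `R^G_n := ⊥((M^G_n)^⊥)`, orthogonals taken in the whole category. -/
def RG (G : ℤ → Set C) (n : ℤ) : Set C := lOrth C (rOrth C (MG C G n))

/-- A pre-generating sequence. -/
structure IsPreGenSeq (G : ℤ → Set C) : Prop where
  compact : ∀ i : ℤ, G i ⊆ compacts C
  generates : smd C {X | extClosure C (unionAll C G) X} = compacts C

/-- A generating sequence. -/
structure IsGenSeq (G : ℤ → Set C) extends IsPreGenSeq C G : Prop where
  shift_cond : ∀ n : ℤ,
    shiftSet C (-1) (G n) ∪ G n ∪ shiftSet C 1 (G n) ⊆ gInt C G (n - 1) (n + 1)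

/-- A finite generating sequence. -/
structure IsFinGenSeq (G : ℤ → Set C) extends IsGenSeq C G : Prop where
  finite : ∀ i : ℤ, (G i).Finite

/-- ℕ-equivalence of generating sequences. -/
def GenSeqNEquiv (G G' : ℤ → Set C) : Prop :=
  ∃ N : ℤ, 0 ≤ N ∧ (∀ n : ℤ, G' n ⊆ gInt C G (n - N) (n + N)) ∧
    ∀ n : ℤ, G n ⊆ gInt C G' (n - N) (n + N)

/-- ℕ-equivalence of (extended good) metrics. -/
def MetricNEquiv (M N : ℤ → Set C) : Prop :=
  ∃ n : ℤ, 0 ≤ n ∧ (∀ i : ℤ, M (i + n) ⊆ N i) ∧ ∀ i : ℤ, N (i + n) ⊆ M i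

/-- An extended good metric. -/
structure IsExtGoodMetric (M : ℤ → Set C) : Prop where
  zero_mem : ∀ (n : ℤ) (X : C), IsZero X → X ∈ M n
  iso_closed : ∀ (n : ℤ) ⦃X Y : C⦄, (X ≅ Y) → X ∈ M n → Y ∈ M n
  star_subset : ∀ n : ℤ, starSet C (M n) (M n) ⊆ M n
  shift_one : ∀ n : ℤ, shiftSet C 1 (M (n + 1)) ⊆ M n
  antitone : ∀ n : ℤ, M (n + 1) ⊆ M n
  shift_neg_one : ∀ n : ℤ, shiftSet C (-1) (M (n + 1)) ⊆ M n

/-- An orthogonal metric. -/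
structure IsOrthMetric (M : ℤ → Set C) extends IsExtGoodMetric C M : Prop where
  orth : ∀ n : ℤ, lOrth C (rOrth C (M n)) = M n

/-- The closure of the compacts `T̄^c := ∩ₙ T^c ⋆ Rₙ`. -/
def closCompacts (Rm : ℤ → Set C) : Set C := ⋂ n : ℤ, starSet C (compacts C) (Rm n)

/-- `(T, R, A)` is `G`-preapproximable. -/
structure IsGPreApprox (G Rm : ℤ → Set C) (A : ℤ) : Prop where
  orthMetric : IsOrthMetric C Rm
  A_pos : 0 < A
  cond0 : ∀ i : ℤ, MG C G i ⊆ ⋃ n ∈ {n : ℤ | |n| ≤ A}, shiftSet C n (MG C G (i + 1))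
  cond1 : ∀ i : ℤ, MG C G (i + A) ⊆ Rm i ∩ compacts C
  cond2 : ∀ n : ℤ, ∃ N : ℤ, ∀ i : ℤ, N ≤ i → homZero C (G n) (Rm i)

/-- There is a distinguished triangle `E ⟶ F ⟶ D ⟶ ΣE` with `E ∈ S` and `D ∈ D`. -/
def approxTriangle (F : C) (S D : Set C) : Prop :=
  ∃ (E Dd : C) (f : E ⟶ F) (g : F ⟶ Dd) (h : Dd ⟶ E⟦(1 : ℤ)⟧),
    Triangle.mk f g h ∈ (distTriang C) ∧ E ∈ S ∧ Dd ∈ D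

/-- `(T, R, A)` is weakly `G`-approximable. -/
structure IsWeakGApprox (G Rm : ℤ → Set C) (A : ℤ) extends IsGPreApprox C G Rm A : Prop where
  hom_vanish : ∀ n i : ℤ, A ≤ n + i → homZero C (G n) (Rm i)
  approx : ∀ i : ℤ, ∀ F ∈ Rm i,
    approxTriangle C F (gBarInt C G (-A - i) (A - i)) (Rm (i + 1))

/-- `(T, R, A)` is `G`-approximable. -/
structure IsGApprox (G Rm : ℤ → Set C) (A : ℤ) extends IsWeakGApprox C G Rm A : Prop where
  approx' : ∀ i : ℤ, ∀ F ∈ Rm i,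
    approxTriangle C F (gBarIntPow C G (-A - i) (A - i) A) (Rm (i + 1))

/-- `(T, R, A)` is weakly `G`-quasiapproximable. -/
structure IsWeakGQuasiApprox (G Rm : ℤ → Set C) (A : ℤ) extends IsGPreApprox C G Rm A : Prop where
  hom_vanish : ∀ n i : ℤ, A ≤ n + i → homZero C (G n) (Rm i)
  approx : ∀ i : ℤ, ∀ F ∈ Rm i ∩ closCompacts C Rm,
    approxTriangle C F (gBarInt C G (-A - i) (A - i)) (Rm (i + 1) ∩ closCompacts C Rm)

/-- `(T, R, A)` is `G`-quasiapproximable. -/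
structure IsGQuasiApprox (G Rm : ℤ → Set C) (A : ℤ) extends IsWeakGQuasiApprox C G Rm A : Prop where
  approx' : ∀ i : ℤ, ∀ F ∈ Rm i ∩ closCompacts C Rm,
    approxTriangle C F (gBarIntPow C G (-A - i) (A - i) A) (Rm (i + 1) ∩ closCompacts C Rm)

/-- The coproduct of a sequence of objects. -/
noncomputable def seqCoprod (E : ℕ → C) : C := ∐ (fun n : ULift.{v} ℕ => E n.down)

/-- The canonical inclusion into the coproduct of a sequence. -/
noncomputable def seqInj (E : ℕ → C) (n : ℕ) : E n ⟶ seqCoprod C E :=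
  Sigma.ι (fun n : ULift.{v} ℕ => E n.down) (ULift.up n)

/-- The map `1 - shift` on the coproduct of a sequence. -/
noncomputable def oneMinusShift (E : ℕ → C) (e : ∀ n, E n ⟶ E (n + 1)) :
    seqCoprod C E ⟶ seqCoprod C E :=
  Sigma.desc (fun n => seqInj C E n.down - e n.down ≫ seqInj C E (n.down + 1))

/-- `H`, equipped with `π`, `δ`, is a homotopy colimit of the sequence `E`. -/
def IsHocolim (E : ℕ → C) (e : ∀ n, E n ⟶ E (n + 1)) (H : C)
    (π : seqCoprod C E ⟶ H) (δ : H ⟶ (seqCoprod C E)⟦(1 : ℤ)⟧) : Prop :=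
  Triangle.mk (oneMinusShift C E e) π δ ∈ (distTriang C)

/-- A single compact generator. -/
def IsCompactGenerator (G₀ : C) : Prop :=
  IsCompactObj C G₀ ∧ ∀ X : C, (∀ n : ℤ, ∀ f : (shiftFunctor C n).obj G₀ ⟶ X, f = 0) → IsZero X

/-- The strictly full subcategory `{Σʲ G₀}`. -/
def singletonShift (G₀ : C) (j : ℤ) : Set C :=
  {X | Nonempty (X ≅ (shiftFunctor C j).obj G₀)}

/-- The generating sequence `Gⁿ := {Σ⁻ⁿ G₀}`. -/
def genSeqNeg (G₀ : C) (n : ℤ) : Set C := singletonShift C G₀ (-n)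

/-- The generating sequence `Gⁿ := {Σⁿ G₀}`. -/
def genSeqPos (G₀ : C) (n : ℤ) : Set C := singletonShift C G₀ n

/-!
An object of `G n` is built from pieces of the `G' m` with `m ≤ n + N`. Since `smd(coprod(-))` is
idempotent, `G^{(-∞,b]} ⊆ G'^{(-∞,b+N]}` for every `b`; by symmetry this is the first equivalence,
with the same constant `N`. The only triangulated input is that the retracts of an extension-closed
class are again closed under extensions. The second equivalence follows since `A ↦ ⊥(A^⊥)` is
monotone.
-/

open ObjectProperty

theorem mem_smd_iff_retractClosure {T : Type*} [Category* T] {P : ObjectProperty T} {X : T} :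
    X ∈ smd T {Y | P Y} ↔ P.retractClosure X :=
  ⟨fun ⟨Y, hY, i, r, e⟩ ↦ ⟨Y, hY, ⟨⟨i, r, e⟩⟩⟩, fun ⟨Y, hY, ⟨e⟩⟩ ↦ ⟨Y, hY, e.i, e.r, e.retract⟩⟩

theorem rOrth_antitone (T : Type*) [Category* T] [Preadditive T] : Antitone (rOrth T) :=
  fun _ _ h _ hX a ha ↦ hX a (h ha)

theorem lOrth_antitone (T : Type*) [Category* T] [Preadditive T] : Antitone (lOrth T) :=
  fun _ _ h _ hX a ha ↦ hX a (h ha)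

theorem MetricNEquiv.map {α β : Type*} {M M' : ℤ → Set α} {φ : Set α → Set β} (hφ : Monotone φ)
    (h : MetricNEquiv α M M') : MetricNEquiv β (fun i ↦ φ (M i)) (fun i ↦ φ (M' i)) := by
  obtain ⟨n, hn, hMM', hM'M⟩ := h
  exact ⟨n, hn, fun i ↦ hφ (hMM' i), fun i ↦ hφ (hM'M i)⟩

section Pretriangulated

variable {T : Type*} [Category* T] [HasZeroObject T] [HasShift T ℤ] [Preadditive T]
  [∀ n : ℤ, (shiftFunctor T n).Additive] [Pretriangulated T]

instance isTriangulatedClosed₂_retractClosure (P : ObjectProperty T) [P.IsTriangulatedClosed₂] :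
    P.retractClosure.IsTriangulatedClosed₂ :=
  .mk' fun X hX h₁ h₃ ↦ by
    have h₂ : (extensionProduct P P).retractClosure X.obj₂ :=
      extensionProduct_retractClosure_retractClosure_le P P _ ⟨_, _, _, _, _, hX, h₁, h₃⟩
    rw [← retractClosure_isoClosure]
    exact monotone_retractClosure
      (extensionProduct_le_of_isTriangulatedClosed₂' le_rfl le_rfl) _ h₂

instance containsZero_extClosure (U : Set T) : ContainsZero (extClosure T U) where
  exists_zero := ⟨_, isZero_zero T, .zero (isZero_zero T)⟩

instance isTriangulatedClosed₂_extClosure (U : Set T) :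
    IsTriangulatedClosed₂ (extClosure T U) where
  ext₂' _ hX h₁ h₃ := le_isoClosure _ _ (.ext _ _ _ hX h₁ h₃)

theorem extClosure_le {U : Set T} {P : ObjectProperty T} [P.ContainsZero]
    [P.IsTriangulatedClosed₂] [P.IsClosedUnderIsomorphisms] (h : ∀ X ∈ U, P X) :
    extClosure T U ≤ P := by
  intro X hX
  induction hX with
  | of hX => exact h _ hX
  | zero hX => exact P.prop_of_isZero hX
  | ext _ _ _ hX _ _ h₁ h₃ => exact P.ext_of_isTriangulatedClosed₂ _ hX h₁ h₃

theorem subset_smd_extClosure (U : Set T) : U ⊆ smd T {X | extClosure T U X} :=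
  fun _ hX ↦ mem_smd_iff_retractClosure.2 (le_retractClosure _ _ (.of hX))

theorem smd_extClosure_subset {U V : Set T} (h : U ⊆ smd T {X | extClosure T V X}) :
    smd T {X | extClosure T U X} ⊆ smd T {X | extClosure T V X} := by
  have hUV : extClosure T U ≤ retractClosure (extClosure T V) :=
    extClosure_le fun X hX ↦ mem_smd_iff_retractClosure.1 (h hX)
  intro X hX
  exact mem_smd_iff_retractClosure.2
    ((retractClosure_le_iff _ _).2 hUV X (mem_smd_iff_retractClosure.1 hX))

variable (T) in
/-- The operation `U ↦ smd(coprod(U))`, bundled as a closure operator to make its monotonicity and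
idempotence available; `gInt` and `gIic` are its values on `unionIcc` and `unionIic`. -/
def smdCoprod : ClosureOperator (Set T) :=
  .mk₂ (fun U ↦ smd T {X | extClosure T U X}) subset_smd_extClosure
    fun _ _ ↦ smd_extClosure_subset

theorem gInt_subset_gIic (G : ℤ → Set T) (a b : ℤ) : gInt T G a b ⊆ gIic T G b :=
  (smdCoprod T).monotone (Set.biUnion_subset_biUnion_left Set.Icc_subset_Iic_self)

theorem gIic_mono (G : ℤ → Set T) : Monotone (gIic T G) := fun _ _ h ↦
  (smdCoprod T).monotone (Set.biUnion_subset_biUnion_left (Set.Iic_subset_Iic.2 h))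

theorem gIic_subset_gIic_add {G G' : ℤ → Set T} {N : ℤ}
    (h : ∀ n, G n ⊆ gIic T G' (n + N)) (b : ℤ) : gIic T G b ⊆ gIic T G' (b + N) :=
  (smdCoprod T).le_closure_iff.1 <| Set.iUnion₂_subset fun m hm ↦
    (h m).trans (gIic_mono G' (add_le_add_left (Set.mem_Iic.1 hm) N))

theorem MG_add_subset {G G' : ℤ → Set T} {N : ℤ} (h : ∀ n, G n ⊆ gIic T G' (n + N)) (i : ℤ) :
    MG T G (i + N) ⊆ MG T G' i := by
  simpa only [MG, neg_add, neg_add_cancel_right] using gIic_subset_gIic_add h (-(i + N))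

theorem statement_2_general {G G' : ℤ → Set T} {N : ℤ} (hN : 0 ≤ N)
    (hG'G : ∀ n, G' n ⊆ gIic T G (n + N)) (hGG' : ∀ n, G n ⊆ gIic T G' (n + N)) :
    MetricNEquiv T (MG T G) (MG T G') ∧ MetricNEquiv T (RG T G) (RG T G') := by
  have hM : MetricNEquiv T (MG T G) (MG T G') := ⟨N, hN, MG_add_subset hGG', MG_add_subset hG'G⟩
  have hR := hM.map ((lOrth_antitone T).comp (rOrth_antitone T))
  exact ⟨hM, hR⟩

end Pretriangulated

theorem statement_2 (G G' : ℤ → Set C)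
    (hcg : CompactlyGenerated C) (hG : IsGenSeq C G) (hG' : IsGenSeq C G')
    (heq : GenSeqNEquiv C G G') :
    MetricNEquiv C (MG C G) (MG C G') ∧ MetricNEquiv C (RG C G) (RG C G') := by
  obtain ⟨N, hN, hG'G, hGG'⟩ := heq
  exact statement_2_general hN (fun n ↦ (hG'G n).trans (gInt_subset_gIic G _ _))
    fun n ↦ (hGG' n).trans (gInt_subset_gIic G' _ _)

end GApprox
end

section
/- Let T be a compactly generated triangulated category with a pre-generating sequence G = {G^n}_{n∈ℤ} and an orthogonal metric R such that for every n ∈ ℤ one has Hom(G^n, R_i) = 0 for all sufficiently large i. Then the closure of the compacts T̄^c := ∩_{n∈ℤ} T^c ⋆ R_n is a triangulated subcategory of T (it is closed under suspension, desuspension, and extensions). -/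
namespace GApprox

open CategoryTheory CategoryTheory.Limits CategoryTheory.Pretriangulated

universe w v u

variable (C : Type u) [Category.{v} C] [HasZeroObject C] [HasShift C ℤ]
  [Preadditive C] [∀ n : ℤ, (shiftFunctor C n).Additive] [Pretriangulated C]
  [HasCoproducts.{v} C]

/-!
Let `S = Rₙ^⊥`, so that `Rₙ = ⊥S`. Given a distinguished triangle `X ⟶ Y ⟶ Z ⟶ ΣX` with `X` and `Z`
in the closure, approximate `Z` by a compact `K'` up to `Rₙ`, and then `X` by a compact `K` up to
`Rᵢ`, where `i` is so large that `Hom(K', ΣRᵢ) = 0`. The composite `K' ⟶ Z ⟶ ΣX` then lifts to `ΣK`,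
which yields a compact extension `L` of `K'` by `K` with a morphism to `Y`. As the octahedral axiom
is not available, the cone of `L ⟶ Y` is not exhibited as an extension of the other two cones.
Instead, two four lemmas applied to the long exact sequences of `Hom(-, t)`, for `t ∈ S`, show that
it has no nonzero morphism to `t`.
-/

lemma leftComp_comp_leftComp {D : Type*} [Category* D] [Preadditive D] {X Y Z W t : D}
    {f : X ⟶ Y} {g : Y ⟶ Z} {h : X ⟶ W} {k : W ⟶ Z} (w : f ≫ g = h ≫ k) :
    (Preadditive.leftComp t f).comp (Preadditive.leftComp t g) =
      (Preadditive.leftComp t h).comp (Preadditive.leftComp t k) :=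
  AddMonoidHom.ext fun u => (reassoc_of% w) u

section Cones

omit [HasCoproducts.{v} C]

variable {C} (t : C)

/-- The condition on a morphism `f` equivalent to its cone having no nonzero morphism to `t`
(see `coneOrth_mor₁_iff`). Unlike the cone, it can be transported along morphisms of triangles. -/
def ConeOrth {X Y : C} (f : X ⟶ Y) : Prop :=
  Function.Injective (Preadditive.leftComp t f) ∧
    Function.Surjective (Preadditive.leftComp t (f⟦(1 : ℤ)⟧'))

variable {t} {T T' : Triangle C} (hT : T ∈ distTriang C) (hT' : T' ∈ distTriang C)

include hT in
lemma coneOrth_mor₁_iff : ConeOrth t T.mor₁ ↔ ∀ f : T.obj₃ ⟶ t, f = 0 := by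
  refine ⟨fun ⟨hinj, hsurj⟩ f => ?_, fun h => ⟨?_, fun g => ?_⟩⟩
  · have hf : T.mor₂ ≫ f = 0 := (injective_iff_map_eq_zero _).1 hinj _
      (comp_distTriang_mor_zero₁₂_assoc T hT f |>.trans zero_comp)
    obtain ⟨g, rfl⟩ := T.yoneda_exact₃ hT f hf
    obtain ⟨w, rfl⟩ := hsurj g
    exact (comp_distTriang_mor_zero₃₁_assoc T hT w).trans zero_comp
  · refine (injective_iff_map_eq_zero _).2 fun f hf => ?_
    obtain ⟨g, rfl⟩ := T.yoneda_exact₂ hT f hf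
    rw [h g, comp_zero]
  · obtain ⟨w, rfl⟩ := T.rotate.yoneda_exact₃ (rot_of_distTriang _ hT) g (h _)
    exact ⟨-w, (Preadditive.comp_neg _ _).trans (Preadditive.neg_comp _ _).symm⟩

include hT in
lemma exact_leftComp_mor₂_mor₁ :
    Function.Exact (Preadditive.leftComp t T.mor₂) (Preadditive.leftComp t T.mor₁) := fun f => by
  refine ⟨fun hf => ?_, ?_⟩
  · obtain ⟨g, hg⟩ := T.yoneda_exact₂ hT f hf
    exact ⟨g, hg.symm⟩
  · rintro ⟨g, rfl⟩
    exact (comp_distTriang_mor_zero₁₂_assoc T hT g).trans zero_comp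

include hT hT'

lemma injective_leftComp_hom₂ (φ : T ⟶ T')
    (h₀ : Function.Surjective (Preadditive.leftComp t (φ.hom₁⟦(1 : ℤ)⟧')))
    (h₁ : Function.Injective (Preadditive.leftComp t φ.hom₁))
    (h₃ : Function.Injective (Preadditive.leftComp t φ.hom₃)) :
    Function.Injective (Preadditive.leftComp t φ.hom₂) :=
  AddMonoidHom.injective_of_surjective_of_injective_of_injective _ _ _ _ _ _ _ _ _ _
    (leftComp_comp_leftComp φ.comm₃) (leftComp_comp_leftComp φ.comm₂)
    (leftComp_comp_leftComp φ.comm₁)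
    (exact_leftComp_mor₂_mor₁ (rot_of_distTriang _ hT'))
    (exact_leftComp_mor₂_mor₁ hT')
    (exact_leftComp_mor₂_mor₁ (rot_of_distTriang _ hT)) h₀ h₃ h₁

lemma surjective_leftComp_hom₃ (φ : T ⟶ T')
    (h₀ : Function.Surjective (Preadditive.leftComp t (φ.hom₁⟦(1 : ℤ)⟧')))
    (h₁ : Function.Injective (Preadditive.leftComp t φ.hom₁))
    (h₂ : Function.Surjective (Preadditive.leftComp t φ.hom₂)) :
    Function.Surjective (Preadditive.leftComp t φ.hom₃) :=
  AddMonoidHom.surjective_of_surjective_of_surjective_of_injective _ _ _ _ _ _ _ _ _ _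
    (leftComp_comp_leftComp φ.comm₃) (leftComp_comp_leftComp φ.comm₂)
    (leftComp_comp_leftComp φ.comm₁)
    (exact_leftComp_mor₂_mor₁ hT')
    (exact_leftComp_mor₂_mor₁ (rot_of_distTriang _ hT))
    (exact_leftComp_mor₂_mor₁ hT) h₀ h₂ h₁

lemma ConeOrth.hom₂ {φ : T ⟶ T'} (h₁ : ConeOrth t φ.hom₁) (h₃ : ConeOrth t φ.hom₃) :
    ConeOrth t φ.hom₂ :=
  ⟨injective_leftComp_hom₂ hT hT' φ h₁.2 h₁.1 h₃.1,
    surjective_leftComp_hom₃ (rot_of_distTriang _ (rot_of_distTriang _ hT))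
      (rot_of_distTriang _ (rot_of_distTriang _ hT')) ((rotate C ⋙ rotate C).map φ) h₃.2 h₃.1 h₁.2⟩

end Cones

section Orthogonals

variable {D : Type u} [Category.{v} D] [Preadditive D]

lemma lOrth_anti {A B : Set D} (h : A ⊆ B) : lOrth D B ⊆ lOrth D A :=
  fun _ hX b hb => hX b (h hb)

lemma smd_lOrth_subset {S : Set D} : smd D (lOrth D S) ⊆ lOrth D S := by
  rintro X ⟨Y, hY, i, r, hir⟩ s hs f
  rw [← Category.id_comp f, ← hir, Category.assoc, hY s hs (r ≫ f), comp_zero]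

omit [HasCoproducts.{v} C]

variable {C} {S U : Set C} {R : ℤ → Set C}

lemma starSet_lOrth_subset : starSet C (lOrth C S) (lOrth C S) ⊆ lOrth C S := by
  rintro Y ⟨X, Z, x, y, z, hT, hX, hZ⟩ s hs f
  obtain ⟨g, rfl⟩ := Triangle.yoneda_exact₂ _ hT f (hX s hs _)
  exact (congrArg _ (hZ s hs g)).trans comp_zero

lemma smd_extClosure_subset_iUnion_lOrth (hR : Antitone R) (hU : U ⊆ ⋃ N, lOrth C (R N)) :
    smd C {X | extClosure C U X} ⊆ ⋃ N, lOrth C (R N) := by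
  have hext : ∀ Y, extClosure C U Y → ∃ N, Y ∈ lOrth C (R N) := fun Y hY => by
    induction hY with
    | of h => exact Set.mem_iUnion.1 (hU h)
    | zero h => exact ⟨0, fun _ _ _ => h.eq_of_src _ _⟩
    | ext f g h hT _ _ ih ih' =>
      obtain ⟨N, hN⟩ := ih
      obtain ⟨N', hN'⟩ := ih'
      exact ⟨max N N', starSet_lOrth_subset ⟨_, _, f, g, h, hT,
        lOrth_anti (hR (le_max_left N N')) hN, lOrth_anti (hR (le_max_right N N')) hN'⟩⟩
  rintro X ⟨Y, hY, hXY⟩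
  obtain ⟨N, hN⟩ := hext Y hY
  exact Set.mem_iUnion.2 ⟨N, smd_lOrth_subset ⟨Y, hN, hXY⟩⟩

end Orthogonals

section Star

omit [HasCoproducts.{v} C]

variable {C} {A A' B B' S : Set C} {R : ℤ → Set C}

lemma exists_comp_shift_mor₁ {T : Triangle C} (hT : T ∈ distTriang C) {K : C}
    (f : K ⟶ T.obj₂⟦(1 : ℤ)⟧) (hf : f ≫ T.mor₂⟦(1 : ℤ)⟧' = 0) :
    ∃ m : K ⟶ T.obj₁⟦(1 : ℤ)⟧, m ≫ T.mor₁⟦(1 : ℤ)⟧' = f := by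
  obtain ⟨m, rfl⟩ := T.rotate.coyoneda_exact₁ (rot_of_distTriang _ hT) f hf
  exact ⟨-m, (Preadditive.neg_comp _ _).trans (Preadditive.comp_neg _ _).symm⟩

lemma starSet_starSet_lOrth_subset (hB : B ⊆ lOrth C S) (hv : homZero C A' (shiftSet C 1 B)) :
    starSet C (starSet C A B) (starSet C A' (lOrth C S)) ⊆
      starSet C (starSet C A A') (lOrth C S) := by
  rintro Y ⟨X, Z, x, y, z, hT, ⟨K, M, a, a', a'', hX, hK, hM⟩,
    ⟨K', M', c, c', c'', hZ, hK', hM'⟩⟩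
  obtain ⟨m, hm⟩ : ∃ m : K' ⟶ K⟦(1 : ℤ)⟧, m ≫ a⟦(1 : ℤ)⟧' = c ≫ z :=
    exists_comp_shift_mor₁ hX (c ≫ z) (hv K' hK' _ ⟨M, hM, ⟨Iso.refl _⟩⟩ _)
  obtain ⟨L, k, l, hL⟩ := distinguished_cocone_triangle₂ m
  obtain ⟨b, hb₁, hb₂⟩ := complete_distinguished_triangle_morphism₂ _ _ hL hT a c hm
  obtain ⟨N, b', b'', hN⟩ := distinguished_cocone_triangle b
  refine ⟨L, N, b, b', b'', hN, ⟨K, K', k, l, m, hL, hK, hK'⟩, fun t ht => ?_⟩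
  let φ : Triangle.mk k l m ⟶ Triangle.mk x y z := ⟨a, b, c, hb₁, hb₂, hm⟩
  have ha : ConeOrth t φ.hom₁ := (coneOrth_mor₁_iff hX).2 (hB hM t ht)
  have hc : ConeOrth t φ.hom₃ := (coneOrth_mor₁_iff hZ).2 (hM' t ht)
  exact (coneOrth_mor₁_iff hN).1 (ha.hom₂ hL hT hc)

lemma shift_mem_starSet (n : ℤ) (hA : ∀ X ∈ A, X⟦n⟧ ∈ A') (hB : ∀ X ∈ B, X⟦n⟧ ∈ B')
    {X : C} (hX : X ∈ starSet C A B) : X⟦n⟧ ∈ starSet C A' B' := by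
  obtain ⟨K, M, f, g, h, hT, hK, hM⟩ := hX
  exact ⟨K⟦n⟧, M⟦n⟧, _, _, _, Triangle.shift_distinguished _ hT n, hA K hK, hB M hM⟩

lemma starSet_mono (hA : A ⊆ A') (hB : B ⊆ B') : starSet C A B ⊆ starSet C A' B' :=
  fun _ ⟨K, M, f, g, h, hT, hK, hM⟩ => ⟨K, M, f, g, h, hT, hA hK, hB hM⟩

lemma shift_mem_iInter_starSet (k : ℤ) (hA : ∀ X ∈ A, X⟦k⟧ ∈ A)
    (hR : ∀ n, shiftSet C k (R (n + 1)) ⊆ R n) :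
    ∀ X ∈ ⋂ n, starSet C A (R n), X⟦k⟧ ∈ ⋂ n, starSet C A (R n) := fun _ hX =>
  Set.mem_iInter.2 fun n => shift_mem_starSet k hA (fun M hM => hR n ⟨M, hM, ⟨Iso.refl _⟩⟩)
    (Set.mem_iInter.1 hX (n + 1))

lemma IsOrthMetric.starSet_iInter_starSet_subset (hR : IsOrthMetric C R)
    (hA : starSet C A A ⊆ A) (hAR : A ⊆ ⋃ N, lOrth C (R N)) :
    starSet C (⋂ n, starSet C A (R n)) (⋂ n, starSet C A (R n)) ⊆ ⋂ n, starSet C A (R n) := by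
  rintro Y ⟨X, Z, x, y, z, hT, hX, hZ⟩
  refine Set.mem_iInter.2 fun n => ?_
  obtain ⟨K, M, c, c', c'', hZn, hK, hM⟩ := Set.mem_iInter.1 hZ n
  obtain ⟨N, hN⟩ := Set.mem_iUnion.1 (hAR hK)
  have hanti : Antitone R := antitone_int_of_succ_le hR.antitone
  have hv : homZero C {K} (shiftSet C 1 (R (max n N + 1))) := by
    rintro _ rfl M' hM'
    exact hN M' (hanti (le_max_right n N) (hR.shift_one _ hM'))
  have hB : R (max n N + 1) ⊆ lOrth C (rOrth C (R n)) :=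
    (hR.orth n).symm ▸ hanti ((le_max_left n N).trans (by lia))
  have hY : Y ∈ starSet C (starSet C A {K}) (lOrth C (rOrth C (R n))) :=
    starSet_starSet_lOrth_subset hB hv ⟨X, Z, x, y, z, hT, Set.mem_iInter.1 hX _,
      ⟨K, M, c, c', c'', hZn, rfl, (hR.orth n).symm ▸ hM⟩⟩
  rw [hR.orth n] at hY
  exact starSet_mono ((starSet_mono subset_rfl (Set.singleton_subset_iff.2 hK)).trans hA)
    subset_rfl hY

end Star

omit [HasCoproducts.{v} C] in
theorem statement_4_general (A : Set C) (Rm : ℤ → Set C)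
    (hshift : ∀ X ∈ A, (shiftFunctor C (1 : ℤ)).obj X ∈ A)
    (hshift' : ∀ X ∈ A, (shiftFunctor C (-1 : ℤ)).obj X ∈ A)
    (hstar : starSet C A A ⊆ A) (hR : IsOrthMetric C Rm) (hAR : A ⊆ ⋃ N, lOrth C (Rm N)) :
    (∀ X ∈ ⋂ n, starSet C A (Rm n), (shiftFunctor C (1 : ℤ)).obj X ∈ ⋂ n, starSet C A (Rm n)) ∧
    (∀ X ∈ ⋂ n, starSet C A (Rm n), (shiftFunctor C (-1 : ℤ)).obj X ∈ ⋂ n, starSet C A (Rm n)) ∧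
    starSet C (⋂ n, starSet C A (Rm n)) (⋂ n, starSet C A (Rm n)) ⊆ ⋂ n, starSet C A (Rm n) :=
  ⟨shift_mem_iInter_starSet 1 hshift hR.shift_one,
    shift_mem_iInter_starSet (-1) hshift' hR.shift_neg_one,
    hR.starSet_iInter_starSet_subset hstar hAR⟩

section Coproducts

variable {D : Type u} [Category.{v} D] [HasCoproducts.{w} D] {α : Type w}

/-- The canonical morphism from a finite subcoproduct to the whole coproduct. It is written as the
`Sigma.desc` of `IsCompactObj`, so that the two agree definitionally. -/
noncomputable def finsetInclusion (f : α → D) (s : Finset α) :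
    ∐ (fun i : {a : α // a ∈ s} => f i.1) ⟶ ∐ f :=
  Sigma.desc fun i => Sigma.ι f i.1

lemma exists_comp_finsetInclusion (f : α → D) {s t : Finset α} (hst : s ⊆ t) :
    ∃ j, j ≫ finsetInclusion f t = finsetInclusion f s :=
  ⟨Sigma.desc fun i => Sigma.ι (fun i : {a : α // a ∈ t} => f i.1) ⟨i.1, hst i.2⟩, by
    ext; simp [finsetInclusion]⟩

open Classical in
instance isSplitMono_finsetInclusion [HasZeroMorphisms D] (f : α → D) (s : Finset α) :
    IsSplitMono (finsetInclusion f s) :=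
  ⟨⟨Sigma.desc fun i =>
      if hi : i ∈ s then Sigma.ι (fun i : {a : α // a ∈ s} => f i.1) ⟨i, hi⟩ else 0, by
    ext i; simp [finsetInclusion, i.2]⟩⟩

lemma sigmaComparison_comp_map_finsetInclusion {E : Type*} [Category* E] [HasCoproducts.{w} E]
    (F : D ⥤ E) (f : α → D) (s : Finset α) :
    sigmaComparison F _ ≫ F.map (finsetInclusion f s) =
      finsetInclusion (fun i => F.obj (f i)) s ≫ sigmaComparison F f := by
  ext i
  simp [finsetInclusion]

/-- A morphism to a coproduct factors through a finite subcoproduct. An object is compact when all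
its morphisms to coproducts do. -/
def FactorsFinitely {f : α → D} {X : D} (g : X ⟶ ∐ f) : Prop :=
  ∃ (s : Finset α) (h : X ⟶ ∐ (fun i : {a : α // a ∈ s} => f i.1)), g = h ≫ finsetInclusion f s

namespace FactorsFinitely

variable {f : α → D} {X Y : D}

lemma comp_left {g : Y ⟶ ∐ f} (hg : FactorsFinitely g) (k : X ⟶ Y) :
    FactorsFinitely (k ≫ g) := by
  obtain ⟨s, h, rfl⟩ := hg
  exact ⟨s, k ≫ h, (Category.assoc _ _ _).symm⟩

lemma add [Preadditive D] {g g' : X ⟶ ∐ f} (hg : FactorsFinitely g) (hg' : FactorsFinitely g') :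
    FactorsFinitely (g + g') := by
  classical
  obtain ⟨s, h, rfl⟩ := hg
  obtain ⟨s', h', rfl⟩ := hg'
  obtain ⟨j, hj⟩ := exists_comp_finsetInclusion f (Finset.subset_union_left (s₁ := s) (s₂ := s'))
  obtain ⟨j', hj'⟩ := exists_comp_finsetInclusion f (Finset.subset_union_right (s₁ := s) (s₂ := s'))
  exact ⟨s ∪ s', h ≫ j + h' ≫ j', by simp only [Preadditive.add_comp, Category.assoc, hj, hj']⟩

lemma of_homEquiv {E : Type*} [Category* E] [HasCoproducts.{w} E] {L : E ⥤ D} {R : D ⥤ E}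
    (adj : L ⊣ R) [PreservesColimit (Discrete.functor f) R] {K : E} {g : L.obj K ⟶ ∐ f}
    (hg : FactorsFinitely (adj.homEquiv _ _ g ≫ inv (sigmaComparison R f))) :
    FactorsFinitely g := by
  obtain ⟨s, h, hh⟩ := hg
  refine ⟨s, (adj.homEquiv _ _).symm (h ≫ sigmaComparison R _), ?_⟩
  rw [← adj.homEquiv_naturality_right_symm, Equiv.eq_symm_apply, Category.assoc,
    sigmaComparison_comp_map_finsetInclusion, ← Category.assoc, ← hh, Category.assoc,
    IsIso.inv_hom_id, Category.comp_id]

end FactorsFinitely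

end Coproducts

section Compacts

variable {C}

lemma factorsFinitely_of_distTriang {T : Triangle C} (hT : T ∈ distTriang C) {α : Type v}
    {f : α → C} {g : T.obj₂ ⟶ ∐ f} (h₁ : FactorsFinitely (T.mor₁ ≫ g))
    (h₃ : ∀ k : T.obj₃ ⟶ ∐ f, FactorsFinitely k) : FactorsFinitely g := by
  obtain ⟨s, h, hh⟩ := h₁
  let p : T.obj₂ ⟶ ∐ f := (g ≫ retraction (finsetInclusion f s)) ≫ finsetInclusion f s
  have hp : T.mor₁ ≫ (g - p) = 0 := by
    simp [p, reassoc_of% hh, hh]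
  obtain ⟨k, hk⟩ := T.yoneda_exact₂ hT _ hp
  rw [← sub_add_cancel g p, hk]
  exact ((h₃ k).comp_left _).add ⟨s, _, rfl⟩

lemma mem_compacts_iff {K : C} :
    K ∈ compacts C ↔ ∀ (α : Type v) (f : α → C) (g : K ⟶ ∐ f), FactorsFinitely g :=
  Iff.rfl

lemma starSet_compacts_subset : starSet C (compacts C) (compacts C) ⊆ compacts C := by
  rintro Y ⟨X, Z, x, y, z, hT, hX, hZ⟩
  rw [mem_compacts_iff] at hX hZ ⊢
  exact fun α f g => factorsFinitely_of_distTriang hT (hX α f (x ≫ g)) (hZ α f)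

lemma shift_mem_compacts {K : C} (hK : K ∈ compacts C) (n : ℤ) : K⟦n⟧ ∈ compacts C := by
  rw [mem_compacts_iff] at hK ⊢
  exact fun α f g => .of_homEquiv (shiftEquiv C n).toAdjunction (hK α _ _)

lemma IsPreGenSeq.compacts_subset_iUnion_lOrth {G R : ℤ → Set C} (hG : IsPreGenSeq C G)
    (hR : Antitone R) (hGR : ∀ n, G n ⊆ ⋃ N, lOrth C (R N)) :
    compacts C ⊆ ⋃ N, lOrth C (R N) :=
  hG.generates ▸ smd_extClosure_subset_iUnion_lOrth hR (Set.iUnion_subset hGR)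

end Compacts

/-- the closure of the compacts is a triangulated subcategory. -/
theorem statement_4 (G Rm : ℤ → Set C)
    (hcg : CompactlyGenerated C) (hG : IsPreGenSeq C G) (hR : IsOrthMetric C Rm)
    (hvan : ∀ n : ℤ, ∃ N : ℤ, ∀ i : ℤ, N ≤ i → homZero C (G n) (Rm i)) :
    (∀ X ∈ closCompacts C Rm, (shiftFunctor C (1 : ℤ)).obj X ∈ closCompacts C Rm) ∧
    (∀ X ∈ closCompacts C Rm, (shiftFunctor C (-1 : ℤ)).obj X ∈ closCompacts C Rm) ∧
    starSet C (closCompacts C Rm) (closCompacts C Rm) ⊆ closCompacts C Rm :=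
  have hGR (n : ℤ) : G n ⊆ ⋃ N, lOrth C (Rm N) := fun K hK =>
    Set.mem_iUnion.2 ((hvan n).imp fun N hN => hN N le_rfl K hK)
  statement_4_general C (compacts C) Rm (fun _ hK => shift_mem_compacts hK 1)
    (fun _ hK => shift_mem_compacts hK (-1)) starSet_compacts_subset hR
    (hG.compacts_subset_iUnion_lOrth (antitone_int_of_succ_le hR.antitone) hGR)

end GApprox
end

section
/- Let T be a compactly generated triangulated category with a generating sequence G, an orthogonal metric R, and an integer A > 0 such that (T, R, A) is G-preapproximable. Then (1) for every i ∈ ℤ, T^c ⊆ ∪_{n∈ℤ} Σ^n R_i; and (2) T^c ⊆ T̄^c ⊆ ∪_{n∈ℤ} R_n, where T̄^c := ∩_{n∈ℤ} T^c ⋆ R_n is the closure of the compacts. -/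
namespace GApprox

open CategoryTheory CategoryTheory.Limits CategoryTheory.Pretriangulated

universe w v u

variable (C : Type u) [Category.{v} C] [HasZeroObject C] [HasShift C ℤ]
  [Preadditive C] [∀ n : ℤ, (shiftFunctor C n).Additive] [Pretriangulated C]
  [HasCoproducts.{v} C]

/-!
Building a compact object from the `G^m` takes finitely many steps, so every compact object lies in
some `M^G_j`. Condition (0) says that `M^G_i` is contained in the closure of `M^G_{i+1}` under
shifts, while `M^G_{i+1} ⊆ M^G_i`; hence the closure of `M^G_i` under shifts does not depend on `i`,
and contains all compact objects. As `M^G_{i+A} ⊆ R_i`, this gives the first claim, and also that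
`⋃ n, R_n` contains the compact objects. This union is closed under extensions because the `R_n` are
nested, so it contains `T^c ⋆ R_0`, and with it the closure of the compacts.
-/

section Unions

variable {T : Type u}

theorem monotone_unionIic (G : ℤ → Set T) : Monotone (unionIic T G) := fun _ _ h =>
  Set.biUnion_subset_biUnion_left (Set.Iic_subset_Iic.2 h)

theorem unionAll_eq_iUnion_unionIic (G : ℤ → Set T) : unionAll T G = ⋃ b, unionIic T G b :=
  (Set.iUnion_subset fun m => Set.subset_iUnion_of_subset m
    (Set.subset_biUnion_of_mem Set.self_mem_Iic)).antisymm
    (Set.iUnion_subset fun _ => Set.iUnion₂_subset_iUnion _ _)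

end Unions

section Category

variable {T : Type u} [Category.{v} T]

theorem smd_mono {U V : Set T} (hUV : U ⊆ V) : smd T U ⊆ smd T V := by
  rintro X ⟨Y, hY, hXY⟩
  exact ⟨Y, hUV hY, hXY⟩

end Category

section Shift

variable {T : Type u} [Category.{v} T] [HasShift T ℤ]

/-- The closure `⋃ n, Σⁿ U` of a class of objects under all shifts and isomorphisms. -/
def shiftClosure (U : Set T) : Set T := ⋃ n : ℤ, shiftSet T n U

theorem shiftSet_mono (n : ℤ) {U V : Set T} (hUV : U ⊆ V) : shiftSet T n U ⊆ shiftSet T n V := by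
  rintro X ⟨Y, hY, hXY⟩
  exact ⟨Y, hUV hY, hXY⟩

theorem subset_shiftSet_zero (U : Set T) : U ⊆ shiftSet T 0 U := fun X hX =>
  ⟨X, hX, ⟨((shiftFunctorZero T ℤ).app X).symm⟩⟩

theorem shiftSet_shiftSet_subset (m n : ℤ) (U : Set T) :
    shiftSet T n (shiftSet T m U) ⊆ shiftSet T (m + n) U := by
  rintro X ⟨Y, ⟨Z, hZ, ⟨eYZ⟩⟩, ⟨eXY⟩⟩
  exact ⟨Z, hZ, ⟨eXY ≪≫ (shiftFunctor T n).mapIso eYZ ≪≫ ((shiftFunctorAdd T m n).app Z).symm⟩⟩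

theorem subset_shiftClosure (U : Set T) : U ⊆ shiftClosure U :=
  Set.subset_iUnion_of_subset 0 (subset_shiftSet_zero U)

theorem shiftClosure_mono {U V : Set T} (hUV : U ⊆ V) : shiftClosure U ⊆ shiftClosure V :=
  Set.iUnion_mono fun n => shiftSet_mono n hUV

theorem shiftClosure_subset_shiftClosure {U V : Set T} (hUV : U ⊆ shiftClosure V) :
    shiftClosure U ⊆ shiftClosure V := by
  refine Set.iUnion_subset fun n X hX => ?_
  obtain ⟨Y, hY, hXY⟩ := hX
  obtain ⟨m, hYm⟩ := Set.mem_iUnion.1 (hUV hY)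
  exact Set.mem_iUnion.2 ⟨m + n, shiftSet_shiftSet_subset m n V ⟨Y, hYm, hXY⟩⟩

end Shift

section Pretriangulated

open scoped ZeroObject

variable {T : Type u} [Category.{v} T] [HasZeroObject T] [HasShift T ℤ] [Preadditive T]
  [∀ n : ℤ, (shiftFunctor T n).Additive] [Pretriangulated T]

theorem starSet_mono_s6 {U U' V V' : Set T} (hU : U ⊆ U') (hV : V ⊆ V') :
    starSet T U V ⊆ starSet T U' V' := by
  rintro Y ⟨X, Z, f, g, h, hT, hX, hZ⟩
  exact ⟨X, Z, f, g, h, hT, hU hX, hV hZ⟩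

theorem subset_starSet_of_zero_mem (U : Set T) {V : Set T} (hV : (0 : T) ∈ V) :
    U ⊆ starSet T U V := fun X hX =>
  ⟨X, 0, 𝟙 X, 0, 0, contractible_distinguished X, hX, hV⟩

theorem extClosure.mono {U V : Set T} (hUV : U ⊆ V) {X : T} (hX : extClosure T U X) :
    extClosure T V X := by
  induction hX with
  | of hX => exact .of (hUV hX)
  | zero hX => exact .zero hX
  | ext f g h hT _ _ ihX ihZ => exact .ext f g h hT ihX ihZ

theorem extClosure.exists_of_directed {ι : Type*} [Nonempty ι] {U : ι → Set T}
    (hU : Directed (· ⊆ ·) U) {X : T} (hX : extClosure T (⋃ i, U i) X) :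
    ∃ i, extClosure T (U i) X := by
  induction hX with
  | of hX =>
    obtain ⟨i, hi⟩ := Set.mem_iUnion.1 hX
    exact ⟨i, .of hi⟩
  | zero hX => exact ⟨Classical.arbitrary ι, .zero hX⟩
  | ext f g h hT _ _ ihX ihZ =>
    obtain ⟨i, hi⟩ := ihX
    obtain ⟨j, hj⟩ := ihZ
    obtain ⟨k, hik, hjk⟩ := hU i j
    exact ⟨k, .ext f g h hT (hi.mono hik) (hj.mono hjk)⟩

theorem antitone_MG (G : ℤ → Set T) : Antitone (MG T G) := fun _ _ h =>
  smd_mono fun _ hX => hX.mono (monotone_unionIic G (neg_le_neg h))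

theorem smd_extClosure_unionAll_subset (G : ℤ → Set T) :
    smd T {X | extClosure T (unionAll T G) X} ⊆ ⋃ n, MG T G n := by
  rintro X ⟨Y, hY, hXY⟩
  have hY' : extClosure T (⋃ b, unionIic T G b) Y := unionAll_eq_iUnion_unionIic G ▸ hY
  obtain ⟨b, hb⟩ := hY'.exists_of_directed (monotone_unionIic G).directed_le
  rw [← neg_neg b] at hb
  exact Set.mem_iUnion.2 ⟨-b, Y, hb, hXY⟩

theorem shiftClosure_MG_eq {G : ℤ → Set T}
    (hshift : ∀ i, MG T G i ⊆ shiftClosure (MG T G (i + 1))) (i j : ℤ) :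
    shiftClosure (MG T G i) = shiftClosure (MG T G j) := by
  have hmono : Monotone fun i => shiftClosure (MG T G i) :=
    monotone_int_of_le_succ fun i => shiftClosure_subset_shiftClosure (hshift i)
  have hanti : Antitone fun i => shiftClosure (MG T G i) := fun _ _ h =>
    shiftClosure_mono (antitone_MG G h)
  exact constant_of_monotone_antitone hmono hanti i j

theorem IsExtGoodMetric.starSet_iUnion_subset {M : ℤ → Set T} (hM : IsExtGoodMetric T M) :
    starSet T (⋃ n, M n) (⋃ n, M n) ⊆ ⋃ n, M n := by
  have hanti : Antitone M := antitone_int_of_succ_le hM.antitone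
  rintro Y ⟨X, Z, f, g, h, hT, hX, hZ⟩
  obtain ⟨a, ha⟩ := Set.mem_iUnion.1 hX
  obtain ⟨b, hb⟩ := Set.mem_iUnion.1 hZ
  exact Set.mem_iUnion.2 ⟨min a b, hM.star_subset _ ⟨X, Z, f, g, h, hT,
    hanti (min_le_left a b) ha, hanti (min_le_right a b) hb⟩⟩

end Pretriangulated

section Compacts

open scoped ZeroObject

variable {T : Type u} [Category.{v} T] [HasZeroObject T] [HasShift T ℤ] [Preadditive T]
  [∀ n : ℤ, (shiftFunctor T n).Additive] [Pretriangulated T] [HasCoproducts.{v} T]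
  {G R : ℤ → Set T}

theorem IsPreGenSeq.compacts_subset_iUnion_MG (hG : IsPreGenSeq T G) :
    compacts T ⊆ ⋃ n, MG T G n :=
  hG.generates.superset.trans (smd_extClosure_unionAll_subset G)

theorem IsPreGenSeq.compacts_subset_shiftClosure_MG (hG : IsPreGenSeq T G)
    (hshift : ∀ i, MG T G i ⊆ shiftClosure (MG T G (i + 1))) (i : ℤ) :
    compacts T ⊆ shiftClosure (MG T G i) :=
  hG.compacts_subset_iUnion_MG.trans <| Set.iUnion_subset fun j =>
    (subset_shiftClosure _).trans (shiftClosure_MG_eq hshift j i).subset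

theorem compacts_subset_closCompacts (hR : ∀ n, (0 : T) ∈ R n) :
    compacts T ⊆ closCompacts T R :=
  Set.subset_iInter fun n => subset_starSet_of_zero_mem _ (hR n)

theorem IsExtGoodMetric.closCompacts_subset_iUnion (hR : IsExtGoodMetric T R)
    (hcompacts : compacts T ⊆ ⋃ n, R n) : closCompacts T R ⊆ ⋃ n, R n :=
  calc
    closCompacts T R ⊆ starSet T (compacts T) (R 0) := Set.iInter_subset _ 0
    _ ⊆ starSet T (⋃ n, R n) (⋃ n, R n) := starSet_mono_s6 hcompacts (Set.subset_iUnion R 0)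
    _ ⊆ ⋃ n, R n := hR.starSet_iUnion_subset

theorem statement_6_general (A : ℤ) (hG : IsPreGenSeq T G) (hR : IsExtGoodMetric T R)
    (hshift : ∀ i, MG T G i ⊆ ⋃ n : ℤ, shiftSet T n (MG T G (i + 1)))
    (hMG : ∀ i, MG T G (i + A) ⊆ R i) :
    (∀ i : ℤ, compacts T ⊆ ⋃ n : ℤ, shiftSet T n (R i)) ∧
    compacts T ⊆ closCompacts T R ∧
    closCompacts T R ⊆ ⋃ n : ℤ, R n := by
  have hcompacts : compacts T ⊆ ⋃ n, R n :=
    hG.compacts_subset_iUnion_MG.trans <| Set.iUnion_subset fun j =>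
      Set.subset_iUnion_of_subset (j - A) <| by simpa only [sub_add_cancel] using hMG (j - A)
  refine ⟨fun i => ?_, ?_, hR.closCompacts_subset_iUnion hcompacts⟩
  · exact (hG.compacts_subset_shiftClosure_MG hshift (i + A)).trans (shiftClosure_mono (hMG i))
  · exact compacts_subset_closCompacts fun n => hR.zero_mem n 0 (isZero_zero T)

end Compacts

theorem statement_6 (G Rm : ℤ → Set C) (A : ℤ)
    (hcg : CompactlyGenerated C) (hG : IsGenSeq C G)
    (hpre : IsGPreApprox C G Rm A) :
    (∀ i : ℤ, compacts C ⊆ ⋃ n : ℤ, shiftSet C n (Rm i)) ∧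
    compacts C ⊆ closCompacts C Rm ∧
    closCompacts C Rm ⊆ ⋃ n : ℤ, Rm n :=
  statement_6_general A hG.toIsPreGenSeq hpre.orthMetric.toIsExtGoodMetric
    (fun i => (hpre.cond0 i).trans (Set.iUnion₂_subset_iUnion _ _))
    fun i => (hpre.cond1 i).trans Set.inter_subset_left

end GApprox
end
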